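/- arXiv:2205.03851 — 2 statements merged into one kernel-verified Lean document; each statement's English description precedes it below -/
import Mathlib

section
/- Let m, n, N, N' be positive integers, let (x_{i,j})_{0≤i≤m,0≤j≤n} be nonnegative integers with Σ_{i,j} x_{i,j} = N, set x_i = Σ_{j=0}^n x_{i,j}, and let (y_i)_{0≤i≤m} be nonnegative integers with Σ_i y_i = N'. Consider the parameter domain consisting of (q_i)_{0≤i≤m} in the open m-dimensional probability simplex together with, for each i, (r_{i,j})_{0≤j≤n} in the open n-dimensional probability simplex (each simplex parameterized by all but one coordinate, with Lebesgue measure), and the density f(q, r) = ∏_{i=0}^m q_i^{x_i + y_i + (1+n)/2 − 1} · ∏_{i=0}^m ∏_{j=0}^n r_{i,j}^{x_{i,j} − 1/2}. Then for any indices (i₀, j₀), ∫ q_{i₀} r_{i₀,j₀} f(q,r) d(q,r) / ∫ f(q,r) d(q,r) = [(x_{i₀} + y_{i₀} + (1+n)/2)/(N + N' + (1+m)(1+n)/2)] · [(x_{i₀,j₀} + 1/2)/(x_{i₀} + (1+n)/2)]. (This is the Bayes estimator of p_{i₀,j₀} = q_{i₀} r_{i₀,j₀} under entropy loss with respect to the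 Jeffreys prior and the direct and aggregated observations.) -/
open Finset MeasureTheory

/-- Fill in the removed coordinate of the simplex parameterization:
the coordinate `k₁` is set to `1 - (sum of the other coordinates)`. -/
noncomputable def extendSimplex {ι : Type*} [Fintype ι] [DecidableEq ι] (k₁ : ι)
    (u : {k : ι // k ≠ k₁} → ℝ) : ι → ℝ :=
  fun k => if h : k = k₁ then 1 - ∑ k', u k' else u ⟨k, h⟩

/-- The open probability simplex, parameterized by all coordinates but `k₁`. -/
def simplexSet {ι : Type*} [Fintype ι] [DecidableEq ι] (k₁ : ι) :
    Set ({k : ι // k ≠ k₁} → ℝ) :=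
  {u | (∀ k, 0 < u k) ∧ ∑ k, u k < 1}

/-- The density `∏ i q_i^{x_i + y_i + (1+n)/2 - 1} ∏ i ∏ j r_{i,j}^{x_{i,j} - 1/2}`
(Jeffreys posterior, up to normalization), in the parameterization of the simplexes
by all but one coordinate. -/
noncomputable def jeffreysDensity (m n N N' : ℕ) (x : Fin (m+1) → Fin (n+1) → ℕ)
    (y : Fin (m+1) → ℕ)
    (u : ({i : Fin (m+1) // i ≠ 0} → ℝ) × (Fin (m+1) → ({j : Fin (n+1) // j ≠ 0} → ℝ))) : ℝ :=
  (∏ i : Fin (m+1),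
      (extendSimplex (0 : Fin (m+1)) u.1 i) ^
        (((∑ j, x i j : ℕ) : ℝ) + (y i : ℝ) + (1 + n) / 2 - 1)) *
    ∏ i : Fin (m+1), ∏ j : Fin (n+1),
      (extendSimplex (0 : Fin (n+1)) (u.2 i) j) ^ ((x i j : ℝ) - 1/2)


noncomputable def dirPow (b t : ℝ) : ℝ := if 0 < t then t ^ (b - 1) else 0

lemma dirPow_nonneg (b t : ℝ) : 0 ≤ dirPow b t := by
  unfold dirPow
  split_ifs with h
  · positivity
  · exact le_rfl

lemma dirPow_measurable (b : ℝ) : Measurable (dirPow b) := by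
  unfold dirPow
  exact Measurable.ite measurableSet_Ioi (by fun_prop) measurable_const

lemma dirPow_scale (b : ℝ) {s : ℝ} (hs : 0 < s) (t : ℝ) :
    dirPow b (s * t) = s ^ (b - 1) * dirPow b t := by
  unfold dirPow
  by_cases h : 0 < t
  · rw [if_pos h, if_pos (mul_pos hs h), Real.mul_rpow hs.le h.le]
  · rw [if_neg h, if_neg (by rwa [mul_pos_iff_of_pos_left hs]), mul_zero]

lemma dirPow_exp_eq (b : ℝ) : (fun t => Real.exp (-t) * dirPow b t) =
    (Set.Ioi (0:ℝ)).indicator (fun t => Real.exp (-t) * t ^ (b - 1)) := by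
  ext t
  by_cases h : 0 < t
  · simp [dirPow, h]
  · simp [dirPow, h]

lemma dirPow_exp_integrable {b : ℝ} (hb : 0 < b) :
    Integrable (fun t => Real.exp (-t) * dirPow b t) := by
  rw [dirPow_exp_eq, integrable_indicator_iff measurableSet_Ioi]
  exact Real.GammaIntegral_convergent hb

lemma dirPow_exp_integral {b : ℝ} (hb : 0 < b) :
    ∫ t, Real.exp (-t) * dirPow b t = Real.Gamma b := by
  rw [dirPow_exp_eq, integral_indicator measurableSet_Ioi, Real.Gamma_eq_integral hb]

lemma dirPow_exp_lintegral {b : ℝ} (hb : 0 < b) :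
    ∫⁻ t, ENNReal.ofReal (Real.exp (-t) * dirPow b t) = ENNReal.ofReal (Real.Gamma b) := by
  rw [← dirPow_exp_integral hb, ofReal_integral_eq_lintegral_ofReal (dirPow_exp_integrable hb)]
  exact Filter.Eventually.of_forall fun t => mul_nonneg (Real.exp_pos _).le (dirPow_nonneg _ _)

noncomputable def dirF {ι : Type*} [Fintype ι] [DecidableEq ι] (k₁ : ι) (a : ι → ℝ) (s : ℝ)
    (u : {k : ι // k ≠ k₁} → ℝ) : ℝ :=
  dirPow (a k₁) (s - ∑ k, u k) * ∏ k : {k : ι // k ≠ k₁}, dirPow (a k) (u k)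

section
variable {ι : Type*} [Fintype ι] [DecidableEq ι] (k₁ : ι) (a : ι → ℝ)

lemma dirF_nonneg (s : ℝ) (u : {k : ι // k ≠ k₁} → ℝ) : 0 ≤ dirF k₁ a s u :=
  mul_nonneg (dirPow_nonneg _ _) (prod_nonneg fun _ _ => dirPow_nonneg _ _)

lemma dirF_measurable : Measurable (fun p : ℝ × ({k : ι // k ≠ k₁} → ℝ) => dirF k₁ a p.1 p.2) := by
  unfold dirF
  refine Measurable.mul ((dirPow_measurable _).comp (by fun_prop)) ?_
  exact Finset.measurable_prod _ fun k _ => (dirPow_measurable _).comp (by fun_prop)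

lemma dirF_measurable' (s : ℝ) : Measurable (fun u => dirF k₁ a s u) :=
  (dirF_measurable k₁ a).comp (measurable_const.prodMk measurable_id)

lemma dirF_zero {s : ℝ} (hs : s ≤ 0) (u : {k : ι // k ≠ k₁} → ℝ) : dirF k₁ a s u = 0 := by
  unfold dirF
  by_cases h : ∀ k, 0 < u k
  · have : 0 ≤ ∑ k, u k := sum_nonneg fun k _ => (h k).le
    rw [dirPow, if_neg (by linarith), zero_mul]
  · push Not at h
    obtain ⟨k, hk⟩ := h
    rw [prod_eq_zero (mem_univ k), mul_zero]
    rw [dirPow, if_neg (by linarith)]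

lemma dirF_scale {s : ℝ} (hs : 0 < s) (u : {k : ι // k ≠ k₁} → ℝ) :
    dirF k₁ a s (s • u) = s ^ (∑ k, (a k - 1)) * dirF k₁ a 1 u := by
  unfold dirF
  have h1 : s - ∑ k, (s • u) k = s * (1 - ∑ k, u k) := by
    simp [mul_sub, mul_sum]
  rw [h1, dirPow_scale _ hs]
  simp only [Pi.smul_apply, smul_eq_mul, dirPow_scale _ hs, prod_mul_distrib]
  rw [Fintype.sum_eq_add_sum_subtype_ne _ k₁, Real.rpow_add hs, Real.rpow_sum_of_pos hs]
  ring

lemma dirF_one (u : {k : ι // k ≠ k₁} → ℝ) :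
    dirF k₁ a 1 u = (simplexSet k₁).indicator
      (fun u => ∏ k, extendSimplex k₁ u k ^ (a k - 1)) u := by
  by_cases h : u ∈ simplexSet k₁
  · rw [Set.indicator_of_mem h, Fintype.prod_eq_mul_prod_subtype_ne _ k₁, dirF]
    congr 1
    · have := h.2
      rw [dirPow, if_pos (by linarith)]; simp [extendSimplex]
    · refine prod_congr rfl fun k _ => ?_
      rw [dirPow, if_pos (h.1 k)]; simp [extendSimplex, k.2]
  · rw [Set.indicator_of_notMem h, dirF]
    by_cases h2 : ∀ k, 0 < u k
    · have : ¬ ∑ k, u k < 1 := fun h3 => h ⟨h2, h3⟩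
      rw [dirPow, if_neg (by linarith), zero_mul]
    · push Not at h2
      obtain ⟨k, hk⟩ := h2
      rw [prod_eq_zero (mem_univ k), mul_zero]
      rw [dirPow, if_neg (by linarith)]

lemma dir_inner_t {s : ℝ} (hs : 0 < s) :
    ∫⁻ t, ENNReal.ofReal (dirF k₁ a s t) =
      ENNReal.ofReal (s ^ (∑ k, a k - 1)) * ∫⁻ u, ENNReal.ofReal (dirF k₁ a 1 u) := by
  have hm : ∀ s, Measurable fun t => ENNReal.ofReal (dirF k₁ a s t) := fun s =>
    ((dirF_measurable k₁ a).comp (measurable_const.prodMk measurable_id)).ennreal_ofReal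
  have h := Measure.map_addHaar_smul (volume : Measure ({k : ι // k ≠ k₁} → ℝ)) hs.ne'
  have h2 : ∫⁻ u, ENNReal.ofReal (dirF k₁ a s (s • u)) =
      ENNReal.ofReal (abs (s ^ Module.finrank ℝ ({k : ι // k ≠ k₁} → ℝ))⁻¹) *
        ∫⁻ t, ENNReal.ofReal (dirF k₁ a s t) := by
    rw [← lintegral_map (μ := volume) (g := fun u => s • u) (hm s) (by fun_prop), h,
      lintegral_smul_measure, smul_eq_mul]
  simp only [dirF_scale k₁ a hs] at h2
  simp only [ENNReal.ofReal_mul (Real.rpow_nonneg hs.le _)] at h2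
  rw [lintegral_const_mul _ (hm 1)] at h2
  have hc : Module.finrank ℝ ({k : ι // k ≠ k₁} → ℝ) = Fintype.card ι - 1 := by
    rw [Module.finrank_fintype_fun_eq_card, Fintype.card_subtype_compl]; simp
  have hcard : 0 < Fintype.card ι := Fintype.card_pos_iff.2 ⟨k₁⟩
  rw [hc, abs_of_pos (by positivity)] at h2
  have h3 := congrArg (fun z => ENNReal.ofReal (s ^ (Fintype.card ι - 1)) * z) h2
  simp only [← mul_assoc] at h3
  rw [← ENNReal.ofReal_mul (by positivity), ← ENNReal.ofReal_mul (by positivity),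
    mul_inv_cancel₀ (by positivity), ENNReal.ofReal_one, one_mul] at h3
  rw [← h3]
  congr 2
  rw [← Real.rpow_natCast, ← Real.rpow_add hs]
  congr 1
  rw [Nat.cast_sub hcard]
  simp

lemma dir_inner_s (ha : ∀ k, 0 < a k) (t : {k : ι // k ≠ k₁} → ℝ) :
    ∫⁻ s, ENNReal.ofReal (Real.exp (-s) * dirF k₁ a s t) =
      ENNReal.ofReal (Real.Gamma (a k₁)) *
        ENNReal.ofReal (∏ k : {k : ι // k ≠ k₁}, Real.exp (-t k) * dirPow (a k) (t k)) := by
  rw [← lintegral_add_right_eq_self _ (∑ k, t k), ← dirPow_exp_lintegral (ha k₁),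
    ← lintegral_mul_const _ (by
      have := dirPow_measurable (a k₁)
      fun_prop)]
  refine lintegral_congr fun s => ?_
  rw [← ENNReal.ofReal_mul (mul_nonneg (Real.exp_pos _).le (dirPow_nonneg _ _))]
  congr 1
  rw [dirF, prod_mul_distrib, ← Real.exp_sum, neg_add, Real.exp_add, sum_neg_distrib,
    add_sub_cancel_right]
  ring

lemma dir_lintegral (ha : ∀ k, 0 < a k) :
    ENNReal.ofReal (Real.Gamma (∑ k, a k)) * ∫⁻ u, ENNReal.ofReal (dirF k₁ a 1 u) =
      ENNReal.ofReal (∏ k, Real.Gamma (a k)) := by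
  have hA : 0 < ∑ k, a k := sum_pos (fun k _ => ha k) ⟨k₁, mem_univ _⟩
  have e1 : ∫⁻ s, ∫⁻ t, ENNReal.ofReal (Real.exp (-s) * dirF k₁ a s t) =
      ENNReal.ofReal (Real.Gamma (∑ k, a k)) * ∫⁻ u, ENNReal.ofReal (dirF k₁ a 1 u) := by
    rw [← dirPow_exp_lintegral hA, ← lintegral_mul_const _ (by
      have := dirPow_measurable (∑ k, a k)
      fun_prop)]
    refine lintegral_congr fun s => ?_
    by_cases hs : 0 < s
    · simp only [ENNReal.ofReal_mul (Real.exp_pos (-s)).le]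
      rw [lintegral_const_mul _ (dirF_measurable' k₁ a s).ennreal_ofReal, dir_inner_t k₁ a hs,
        dirPow, if_pos hs, mul_assoc]
    · simp [dirF_zero k₁ a (not_lt.1 hs), dirPow, hs]
  have e2 : ∫⁻ t, ∫⁻ s, ENNReal.ofReal (Real.exp (-s) * dirF k₁ a s t) =
      ENNReal.ofReal (∏ k, Real.Gamma (a k)) := by
    simp only [dir_inner_s k₁ a ha]
    rw [lintegral_const_mul' _ _ ENNReal.ofReal_ne_top, ← ofReal_integral_eq_lintegral_ofReal]
    · rw [integral_fintype_prod_volume_eq_prod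
          (fun (k : {k : ι // k ≠ k₁}) x => Real.exp (-x) * dirPow (a k) x),
        ← ENNReal.ofReal_mul (Real.Gamma_pos_of_pos (ha _)).le,
        Fintype.prod_eq_mul_prod_subtype_ne _ k₁]
      simp only [dirPow_exp_integral (ha _)]
    · exact Integrable.fintype_prod
        (f := fun (k : {k : ι // k ≠ k₁}) x => Real.exp (-x) * dirPow (a k) x)
        fun k => dirPow_exp_integrable (ha k)
    · exact Filter.Eventually.of_forall fun t => prod_nonneg fun k _ =>
        mul_nonneg (Real.exp_pos _).le (dirPow_nonneg _ _)
  rw [← e1, ← e2]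
  refine lintegral_lintegral_swap ?_
  refine Measurable.aemeasurable ?_
  have := dirF_measurable k₁ a
  exact (Measurable.mul (by fun_prop) this).ennreal_ofReal

lemma simplexSet_measurable : MeasurableSet (simplexSet k₁) := by
  unfold simplexSet
  refine MeasurableSet.inter ?_ (measurableSet_lt
    (f := fun u : {k : ι // k ≠ k₁} → ℝ => ∑ k, u k) (by fun_prop) measurable_const)
  have : {u : {k : ι // k ≠ k₁} → ℝ | ∀ k, 0 < u k} = ⋂ k, {u | 0 < u k} := by ext; simp
  change MeasurableSet {u : {k : ι // k ≠ k₁} → ℝ | ∀ k, 0 < u k}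
  rw [this]
  exact MeasurableSet.iInter fun k => measurableSet_lt measurable_const (by fun_prop)

lemma dirichlet_integral (ha : ∀ k, 0 < a k) :
    ∫ u in simplexSet k₁, ∏ k, extendSimplex k₁ u k ^ (a k - 1) =
      (∏ k, Real.Gamma (a k)) / Real.Gamma (∑ k, a k) := by
  have hA : 0 < ∑ k, a k := sum_pos (fun k _ => ha k) ⟨k₁, mem_univ _⟩
  have hG := Real.Gamma_pos_of_pos hA
  rw [← integral_indicator (simplexSet_measurable k₁)]
  simp only [← dirF_one]
  rw [integral_eq_lintegral_of_nonneg_ae (Filter.Eventually.of_forall fun u => dirF_nonneg _ _ _ _)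
    (dirF_measurable' k₁ a 1).aestronglyMeasurable]
  have h := congrArg ENNReal.toReal (dir_lintegral k₁ a ha)
  rw [ENNReal.toReal_mul, ENNReal.toReal_ofReal hG.le, ENNReal.toReal_ofReal
    (prod_nonneg fun k _ => (Real.Gamma_pos_of_pos (ha k)).le)] at h
  rw [← h, mul_div_cancel_left₀ _ hG.ne']

noncomputable def dirD (a : ι → ℝ) : ℝ := (∏ k, Real.Gamma (a k)) / Real.Gamma (∑ k, a k)

lemma dirD_pos (k₁ : ι) (ha : ∀ k, 0 < a k) : 0 < dirD a :=
  div_pos (prod_pos fun k _ => Real.Gamma_pos_of_pos (ha k))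
    (Real.Gamma_pos_of_pos (sum_pos (fun k _ => ha k) ⟨k₁, mem_univ _⟩))

lemma dirD_succ (ha : ∀ k, 0 < a k) (k₀ : ι) :
    dirD (fun k => a k + if k = k₀ then 1 else 0) = a k₀ / (∑ k, a k) * dirD a := by
  have hA : 0 < ∑ k, a k := sum_pos (fun k _ => ha k) ⟨k₀, mem_univ _⟩
  have hG := Real.Gamma_pos_of_pos hA
  unfold dirD
  rw [sum_add_distrib, sum_ite_eq' univ k₀, if_pos (mem_univ _), Real.Gamma_add_one hA.ne']
  rw [Fintype.prod_eq_mul_prod_subtype_ne _ k₀,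
    Fintype.prod_eq_mul_prod_subtype_ne (fun k => Real.Gamma (a k)) k₀]
  beta_reduce
  rw [if_pos rfl,
    Real.Gamma_add_one (ha k₀).ne']
  have : ∀ k : {k // k ≠ k₀}, Real.Gamma (a k + if (k:ι) = k₀ then 1 else 0) = Real.Gamma (a k) :=
    fun k => by simp [k.2]
  simp only [this]
  field_simp

lemma extend_pos {u : {k : ι // k ≠ k₁} → ℝ} (hu : u ∈ simplexSet k₁) (k : ι) :
    0 < extendSimplex k₁ u k := by
  unfold extendSimplex
  split_ifs with h
  · have := hu.2; linarith
  · exact hu.1 _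

lemma extend_mul {u : {k : ι // k ≠ k₁} → ℝ} (hu : u ∈ simplexSet k₁) (k₀ : ι) :
    extendSimplex k₁ u k₀ * ∏ k, extendSimplex k₁ u k ^ (a k - 1) =
      ∏ k, extendSimplex k₁ u k ^ ((a k + if k = k₀ then 1 else 0) - 1) := by
  rw [Fintype.prod_eq_mul_prod_subtype_ne _ k₀,
    Fintype.prod_eq_mul_prod_subtype_ne (fun k => extendSimplex k₁ u k ^ ((a k + if k = k₀ then 1 else 0) - 1)) k₀,
    if_pos rfl]
  have : ∀ k : {k // k ≠ k₀}, (a k + if (k:ι) = k₀ then 1 else 0) = a k :=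
    fun k => by simp [k.2]
  simp only [this]
  rw [← mul_assoc]
  congr 1
  have hp := extend_pos k₁ hu k₀
  nth_rewrite 1 [← Real.rpow_one (extendSimplex k₁ u k₀)]
  rw [← Real.rpow_add hp]
  congr 1; ring

end

lemma joint_integral {ι κ : Type*} [Fintype ι] [DecidableEq ι] [Fintype κ] [DecidableEq κ]
    (k₁ : ι) (l₁ : κ) (a : ι → ℝ) (b : ι → κ → ℝ) (ha : ∀ i, 0 < a i) (hb : ∀ i j, 0 < b i j) :
    ∫ u in {u : ({i : ι // i ≠ k₁} → ℝ) × (ι → ({j : κ // j ≠ l₁} → ℝ)) |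
        u.1 ∈ simplexSet k₁ ∧ ∀ i, u.2 i ∈ simplexSet l₁},
      (∏ i, extendSimplex k₁ u.1 i ^ (a i - 1)) *
        ∏ i, ∏ j, extendSimplex l₁ (u.2 i) j ^ (b i j - 1) = dirD a * ∏ i, dirD (b i) := by
  have hset : {u : ({i : ι // i ≠ k₁} → ℝ) × (ι → ({j : κ // j ≠ l₁} → ℝ)) |
        u.1 ∈ simplexSet k₁ ∧ ∀ i, u.2 i ∈ simplexSet l₁} =
      simplexSet k₁ ×ˢ (Set.univ.pi fun _ => simplexSet l₁) := by
    ext u; simp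
  rw [hset, Measure.volume_eq_prod, setIntegral_prod_mul (fun u => ∏ i, extendSimplex k₁ u i ^ (a i - 1))
    (fun v : ι → ({j : κ // j ≠ l₁} → ℝ) => ∏ i, ∏ j, extendSimplex l₁ (v i) j ^ (b i j - 1)),
    dirichlet_integral k₁ a ha, volume_pi, Measure.restrict_pi_pi,
    integral_fintype_prod_eq_prod (fun i w => ∏ j, extendSimplex l₁ w j ^ (b i j - 1))]
  simp only [dirichlet_integral l₁ _ (hb _)]
  rfl

theorem bayes_estimator_direct_and_aggregated (m n N N' : ℕ)
    (hm : 1 ≤ m) (hn : 1 ≤ n) (hN : 1 ≤ N) (hN' : 1 ≤ N')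
    (x : Fin (m+1) → Fin (n+1) → ℕ) (hx : ∑ i, ∑ j, x i j = N)
    (y : Fin (m+1) → ℕ) (hy : ∑ i, y i = N')
    (i₀ : Fin (m+1)) (j₀ : Fin (n+1)) :
    (∫ u in {u : ({i : Fin (m+1) // i ≠ 0} → ℝ) ×
          (Fin (m+1) → ({j : Fin (n+1) // j ≠ 0} → ℝ)) |
          u.1 ∈ simplexSet (0 : Fin (m+1)) ∧ ∀ i, u.2 i ∈ simplexSet (0 : Fin (n+1))},
        (extendSimplex (0 : Fin (m+1)) u.1 i₀) *
          (extendSimplex (0 : Fin (n+1)) (u.2 i₀) j₀) * jeffreysDensity m n N N' x y u) /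
      (∫ u in {u : ({i : Fin (m+1) // i ≠ 0} → ℝ) ×
          (Fin (m+1) → ({j : Fin (n+1) // j ≠ 0} → ℝ)) |
          u.1 ∈ simplexSet (0 : Fin (m+1)) ∧ ∀ i, u.2 i ∈ simplexSet (0 : Fin (n+1))},
        jeffreysDensity m n N N' x y u) =
      ((((∑ j, x i₀ j : ℕ) : ℝ) + (y i₀ : ℝ) + (1 + n) / 2) /
          ((N : ℝ) + (N' : ℝ) + (1 + m) * (1 + n) / 2)) *
        (((x i₀ j₀ : ℝ) + 1/2) / (((∑ j, x i₀ j : ℕ) : ℝ) + (1 + n) / 2)) := by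
  set a : Fin (m+1) → ℝ := fun i => ((∑ j, x i j : ℕ) : ℝ) + (y i : ℝ) + (1 + n) / 2 with ha
  set b : Fin (m+1) → Fin (n+1) → ℝ := fun i j => (x i j : ℝ) + 1/2 with hb
  have hapos : ∀ i, 0 < a i := fun i => by positivity
  have hbpos : ∀ i j, 0 < b i j := fun i j => by positivity
  have hdens : ∀ u, jeffreysDensity m n N N' x y u =
      (∏ i, extendSimplex 0 u.1 i ^ (a i - 1)) *
        ∏ i, ∏ j, extendSimplex 0 (u.2 i) j ^ (b i j - 1) := by
    intro u
    unfold jeffreysDensity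
    congr 1
    refine prod_congr rfl fun i _ => prod_congr rfl fun j _ => ?_
    congr 1
    simp only [hb]; ring
  set a' : Fin (m+1) → ℝ := fun i => a i + if i = i₀ then 1 else 0 with ha'
  set b' : Fin (m+1) → Fin (n+1) → ℝ :=
    fun i => if i = i₀ then (fun j => b i j + if j = j₀ then 1 else 0) else b i with hb'
  have ha'pos : ∀ i, 0 < a' i := fun i => by
    have := hapos i
    simp only [ha']; split_ifs <;> linarith
  have hb'pos : ∀ i j, 0 < b' i j := fun i j => by
    have := hbpos i j
    simp only [hb']; split_ifs <;> simp <;> try split_ifs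
    all_goals linarith
  have hmeas : MeasurableSet {u : ({i : Fin (m+1) // i ≠ 0} → ℝ) ×
          (Fin (m+1) → ({j : Fin (n+1) // j ≠ 0} → ℝ)) |
          u.1 ∈ simplexSet (0 : Fin (m+1)) ∧ ∀ i, u.2 i ∈ simplexSet (0 : Fin (n+1))} := by
    have hset : {u : ({i : Fin (m+1) // i ≠ 0} → ℝ) ×
          (Fin (m+1) → ({j : Fin (n+1) // j ≠ 0} → ℝ)) |
          u.1 ∈ simplexSet (0 : Fin (m+1)) ∧ ∀ i, u.2 i ∈ simplexSet (0 : Fin (n+1))} =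
        simplexSet 0 ×ˢ (Set.univ.pi fun _ => simplexSet 0) := by
      ext u; simp
    rw [hset]
    exact (simplexSet_measurable _).prod
      (MeasurableSet.univ_pi fun _ => simplexSet_measurable _)
  have hnum := joint_integral (0 : Fin (m+1)) (0 : Fin (n+1)) a' b' ha'pos hb'pos
  have hden := joint_integral (0 : Fin (m+1)) (0 : Fin (n+1)) a b hapos hbpos
  simp only [hdens]
  rw [hden]
  rw [setIntegral_congr_fun (g := fun u => (∏ i, extendSimplex 0 u.1 i ^ (a' i - 1)) *
        ∏ i, ∏ j, extendSimplex 0 (u.2 i) j ^ (b' i j - 1)) hmeas, hnum]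
  · have e1 : dirD a' = a i₀ / (∑ k, a k) * dirD a := dirD_succ a hapos i₀
    have e2 : ∏ i, dirD (b' i) = b i₀ j₀ / (∑ j, b i₀ j) * ∏ i, dirD (b i) := by
      rw [Fintype.prod_eq_mul_prod_subtype_ne _ i₀,
        Fintype.prod_eq_mul_prod_subtype_ne (fun i => dirD (b i)) i₀, ← mul_assoc]
      congr 1
      · simp only [hb', if_pos]
        exact dirD_succ (b i₀) (hbpos i₀) j₀
      · refine prod_congr rfl fun k _ => ?_
        simp only [hb', if_neg k.2]
    have p1 := dirD_pos a 0 hapos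
    have p2 : 0 < ∏ i, dirD (b i) := prod_pos fun i _ => dirD_pos (b i) 0 (hbpos i)
    have s1 : ∑ k, a k = (N : ℝ) + (N' : ℝ) + (1 + m) * (1 + n) / 2 := by
      simp only [ha, sum_add_distrib, sum_const, card_univ, Fintype.card_fin, ← Nat.cast_sum, hx, hy]
      simp; ring
    have s2 : ∑ j, b i₀ j = ((∑ j, x i₀ j : ℕ) : ℝ) + (1 + n) / 2 := by
      simp only [hb, sum_add_distrib, sum_const, card_univ, Fintype.card_fin]
      simp; ring
    rw [e1, e2, s1, s2]
    have q1 : (0:ℝ) < (N : ℝ) + (N' : ℝ) + (1 + m) * (1 + n) / 2 := by positivity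
    have q2 : (0:ℝ) < ((∑ j, x i₀ j : ℕ) : ℝ) + (1 + n) / 2 := by positivity
    rw [div_eq_iff (mul_pos p1 p2).ne']
    ring
  · intro u hu
    have f1 := extend_mul 0 a hu.1 i₀
    have f2 : extendSimplex 0 (u.2 i₀) j₀ * ∏ i, ∏ j, extendSimplex 0 (u.2 i) j ^ (b i j - 1) =
        ∏ i, ∏ j, extendSimplex 0 (u.2 i) j ^ (b' i j - 1) := by
      rw [Fintype.prod_eq_mul_prod_subtype_ne _ i₀,
        Fintype.prod_eq_mul_prod_subtype_ne
          (fun i => ∏ j, extendSimplex 0 (u.2 i) j ^ (b' i j - 1)) i₀, ← mul_assoc]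
      congr 1
      · simp only [hb', if_pos]
        exact extend_mul 0 (b i₀) (hu.2 i₀) j₀
      · refine prod_congr rfl fun k _ => ?_
        simp only [hb', if_neg k.2]
    change _ = (∏ i, extendSimplex 0 u.1 i ^ (a' i - 1)) * 
        ∏ i, ∏ j, extendSimplex 0 (u.2 i) j ^ (b' i j - 1)
    rw [← f2, ← f1]
    ring
end

section
/- Let m ≥ 1, n ≥ 3, N ≥ 1, N' ≥ 1 be integers, and let p* denote the uniform probability vector with p*_{i,j} = 1/((1+m)(1+n)) for all i, j. Then for every vector p = (p_{i,j}) of positive reals summing to 1, Δ_p(N, N') ≤ Δ_{p*}(N, N'). -/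
open Finset

/-- Binomial(N, q) probability mass function at `x`. -/
noncomputable def binPMF (N : ℕ) (q : ℝ) (x : ℕ) : ℝ :=
  (N.choose x : ℝ) * q ^ x * (1 - q) ^ (N - x)

/-- The entropy loss `L(d, p) = ∑ᵢ ∑ⱼ pᵢⱼ log (pᵢⱼ / dᵢⱼ)`. -/
noncomputable def entropyLoss {m n : ℕ} (d p : Fin (m+1) → Fin (n+1) → ℝ) : ℝ :=
  ∑ i, ∑ j, p i j * Real.log (p i j / d i j)

/-- Support of the Multinomial(N, p) distribution on (1+m)(1+n) cells. -/
def suppX (m n N : ℕ) : Finset (Fin (m+1) → Fin (n+1) → Fin (N+1)) :=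
  Finset.univ.filter fun x => ∑ i, ∑ j, (x i j : ℕ) = N

/-- Support of the Multinomial(N', p·) distribution on 1+m cells. -/
def suppY (m N' : ℕ) : Finset (Fin (m+1) → Fin (N'+1)) :=
  Finset.univ.filter fun y => ∑ i, (y i : ℕ) = N'

/-- Multinomial(N, p) probability of the outcome `x`. -/
noncomputable def wX {m n N : ℕ} (p : Fin (m+1) → Fin (n+1) → ℝ)
    (x : Fin (m+1) → Fin (n+1) → Fin (N+1)) : ℝ :=
  (Nat.multinomial Finset.univ (fun k : Fin (m+1) × Fin (n+1) => (x k.1 k.2 : ℕ)) : ℝ) *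
    ∏ i, ∏ j, p i j ^ (x i j : ℕ)

/-- Multinomial(N', (pᵢ.)ᵢ) probability of the outcome `y`, where `pᵢ. = ∑ⱼ pᵢⱼ`. -/
noncomputable def wY {m n N' : ℕ} (p : Fin (m+1) → Fin (n+1) → ℝ)
    (y : Fin (m+1) → Fin (N'+1)) : ℝ :=
  (Nat.multinomial Finset.univ (fun i => (y i : ℕ)) : ℝ) *
    ∏ i, (∑ j, p i j) ^ (y i : ℕ)

/-- The estimator `p̃` based on the direct observations only. -/
noncomputable def ptilde {m n N : ℕ} (x : Fin (m+1) → Fin (n+1) → Fin (N+1)) :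
    Fin (m+1) → Fin (n+1) → ℝ :=
  fun i j => ((x i j : ℝ) + 1/2) / ((N : ℝ) + (1 + m) * (1 + n) / 2)

/-- The estimator `p̂` based on the direct and aggregated observations. -/
noncomputable def phat {m n N N' : ℕ} (x : Fin (m+1) → Fin (n+1) → Fin (N+1))
    (y : Fin (m+1) → Fin (N'+1)) : Fin (m+1) → Fin (n+1) → ℝ :=
  fun i j =>
    ((((∑ j', (x i j' : ℕ)) : ℕ) : ℝ) + (y i : ℝ) + (1 + n) / 2) /
        ((N : ℝ) + (N' : ℝ) + (1 + m) * (1 + n) / 2) *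
      (((x i j : ℝ) + 1/2) / ((((∑ j', (x i j' : ℕ)) : ℕ) : ℝ) + (1 + n) / 2))

/-- The risk difference `Δ_p(N, N') = E_p[L(p̂, p)] − E_p[L(p̃, p)]`, the expectation being
a finite sum over the supports of the independent multinomial observations. -/
noncomputable def riskDiff (m n : ℕ) (p : Fin (m+1) → Fin (n+1) → ℝ) (N N' : ℕ) : ℝ :=
  ∑ x ∈ suppX m n N, ∑ y ∈ suppY m N',
    wX p x * wY p y * (entropyLoss (phat x y) p - entropyLoss (ptilde x) p)

/-- Binomial expectation operator, defined recursively. -/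
noncomputable def binE : ℕ → (ℕ → ℝ) → ℝ → ℝ
  | 0, H, _ => H 0
  | M + 1, H, q => (1 - q) * binE M H q + q * binE M (fun k => H (k + 1)) q

lemma binE_succ (M : ℕ) (H : ℕ → ℝ) (q : ℝ) :
    binE (M + 1) H q = (1 - q) * binE M H q + q * binE M (fun k => H (k + 1)) q := rfl

lemma binE_add (M : ℕ) : ∀ (G H : ℕ → ℝ) (q : ℝ),
    binE M (fun k => G k + H k) q = binE M G q + binE M H q := by
  induction M with
  | zero => intro G H q; rfl
  | succ M ih => intro G H q; simp only [binE_succ, ih]; ring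

lemma binE_sub (M : ℕ) : ∀ (G H : ℕ → ℝ) (q : ℝ),
    binE M (fun k => G k - H k) q = binE M G q - binE M H q := by
  induction M with
  | zero => intro G H q; rfl
  | succ M ih => intro G H q; simp only [binE_succ, ih]; ring

lemma binE_const (M : ℕ) (c : ℝ) (q : ℝ) : binE M (fun _ => c) q = c := by
  induction M with
  | zero => rfl
  | succ M ih => simp only [binE_succ, ih]; ring

lemma binE_nonneg (M : ℕ) : ∀ (H : ℕ → ℝ) (q : ℝ), (∀ k, 0 ≤ H k) → 0 ≤ q → q ≤ 1 →
    0 ≤ binE M H q := by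
  induction M with
  | zero => intro H q h _ _; exact h 0
  | succ M ih =>
    intro H q h h0 h1
    rw [binE_succ]
    exact add_nonneg (mul_nonneg (by linarith) (ih _ _ h h0 h1))
      (mul_nonneg h0 (ih _ _ (fun k => h (k + 1)) h0 h1))

lemma binE_comp (M M' : ℕ) : ∀ (f : ℕ → ℝ) (q : ℝ),
    binE M (fun k => binE M' (fun l => f (k + l)) q) q = binE (M + M') f q := by
  induction M with
  | zero => intro f q; simp [binE]
  | succ M ih =>
    intro f q
    rw [show M + 1 + M' = (M + M') + 1 by ring, binE_succ, binE_succ, ih,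
      ← ih (fun k => f (k + 1))]
    simp only [add_right_comm]

lemma binE_shift (M : ℕ) : ∀ (G : ℕ → ℝ) (q : ℝ),
    binE (M + 1) (fun k => (k : ℝ) * G (k - 1)) q = ((M : ℝ) + 1) * q * binE M G q := by
  induction M with
  | zero => intro G q; simp [binE]
  | succ M ih =>
    intro G q
    have e : (fun k : ℕ => ((k + 1 : ℕ) : ℝ) * G (k + 1 - 1)) =
        fun k : ℕ => (k : ℝ) * (fun k => G (k + 1)) (k - 1) + G k := by
      funext k
      rcases k with _ | k
      · simp
      · simp; ring
    rw [binE_succ (M + 1), ih, e, binE_add, ih (fun k => G (k + 1)), binE_succ M G]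
    push_cast
    ring

lemma binE_hasDerivAt (M : ℕ) : ∀ (H : ℕ → ℝ) (q : ℝ),
    HasDerivAt (fun q => binE (M + 1) H q)
      (((M : ℝ) + 1) * binE M (fun k => H (k + 1) - H k) q) q := by
  induction M with
  | zero =>
    intro H q
    have h := (((hasDerivAt_id q).const_sub 1).mul_const (H 0)).add
      ((hasDerivAt_id q).mul_const (H 1))
    refine h.congr_deriv ?_
    simp [binE]; ring
  | succ M ih =>
    intro H q
    have h := (((hasDerivAt_id q).const_sub 1).mul (ih H q)).add
      ((hasDerivAt_id q).mul (ih (fun k => H (k + 1)) q))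
    refine h.congr_deriv ?_
    rw [binE_succ M (fun k => H (k + 1) - H k)]
    simp only [id]
    have e1 := binE_sub (M + 1) (fun k => H (k + 1)) H q
    rw [binE_succ M (fun k => H (k + 1) - H k)] at e1
    push_cast
    linear_combination -e1

lemma binE_convexOn (M : ℕ) (H : ℕ → ℝ) (hH : ∀ k, 0 ≤ H (k + 2) - 2 * H (k + 1) + H k) :
    ConvexOn ℝ (Set.Icc 0 1) (fun q => binE (M + 2) H q) := by
  refine convexOn_of_hasDerivWithinAt2_nonneg (convex_Icc 0 1)
    (f' := fun q => (((M + 1 : ℕ) : ℝ) + 1) * binE (M + 1) (fun k => H (k + 1) - H k) q)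
    (f'' := fun q => (((M + 1 : ℕ) : ℝ) + 1) * (((M : ℝ) + 1) *
      binE M (fun k => (H (k + 1 + 1) - H (k + 1)) - (H (k + 1) - H k)) q)) ?_ ?_ ?_ ?_
  · exact fun q _ => (binE_hasDerivAt (M + 1) H q).continuousAt.continuousWithinAt
  · exact fun q _ => (binE_hasDerivAt (M + 1) H q).hasDerivWithinAt
  · exact fun q _ => ((binE_hasDerivAt M (fun k => H (k + 1) - H k) q).const_mul _).hasDerivWithinAt
  · intro q hq
    rw [interior_Icc] at hq
    refine mul_nonneg (by positivity) (mul_nonneg (by positivity) ?_)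
    refine binE_nonneg _ _ _ (fun k => ?_) hq.1.le hq.2.le
    have := hH k
    simp only [add_assoc, one_add_one_eq_two]
    linarith

lemma H_real_convex (a : ℝ) (ha : 2 ≤ a) :
    ConvexOn ℝ (Set.Ici (1 : ℝ))
      (fun x => x * (x - 1) * (Real.log (x + a - 1) - Real.log (x + a - 2))) := by
  have key : ∀ x : ℝ, 1 ≤ x → HasDerivAt
      (fun x => x * (x - 1) * (Real.log (x + a - 1) - Real.log (x + a - 2)))
      ((2 * x - 1) * (Real.log (x + a - 1) - Real.log (x + a - 2))
        + x * (x - 1) * (1 / (x + a - 1) - 1 / (x + a - 2))) x := by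
    intro x hx
    have h1 : HasDerivAt (fun x : ℝ => x + a - 1) 1 x :=
      ((hasDerivAt_id x).add_const a).sub_const 1
    have h2 : HasDerivAt (fun x : ℝ => x + a - 2) 1 x :=
      ((hasDerivAt_id x).add_const a).sub_const 2
    have h3 := (h1.log (by linarith)).sub (h2.log (by linarith))
    have h4 := (hasDerivAt_id x).mul ((hasDerivAt_id x).sub_const 1)
    refine (h4.mul h3).congr_deriv ?_
    simp only [id, Pi.mul_apply, Pi.sub_apply]
    ring
  have key2 : ∀ x : ℝ, 1 ≤ x → HasDerivAt
      (fun x => (2 * x - 1) * (Real.log (x + a - 1) - Real.log (x + a - 2))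
        + x * (x - 1) * (1 / (x + a - 1) - 1 / (x + a - 2)))
      (2 * (Real.log (x + a - 1) - Real.log (x + a - 2))
        + 2 * (2 * x - 1) * (1 / (x + a - 1) - 1 / (x + a - 2))
        + x * (x - 1) * (1 / (x + a - 2) ^ 2 - 1 / (x + a - 1) ^ 2)) x := by
    intro x hx
    have h1 : HasDerivAt (fun x : ℝ => x + a - 1) 1 x :=
      ((hasDerivAt_id x).add_const a).sub_const 1
    have h2 : HasDerivAt (fun x : ℝ => x + a - 2) 1 x :=
      ((hasDerivAt_id x).add_const a).sub_const 2
    have h3 := (h1.log (by linarith)).sub (h2.log (by linarith))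
    have h4 := (hasDerivAt_id x).mul ((hasDerivAt_id x).sub_const 1)
    have h5 := ((hasDerivAt_const x (1:ℝ)).div h1 (by linarith)).sub
      ((hasDerivAt_const x (1:ℝ)).div h2 (by linarith))
    have h6 := ((hasDerivAt_id x).const_mul 2).sub_const 1
    refine ((h6.mul h3).add (h4.mul h5)).congr_deriv ?_
    simp only [id, Pi.mul_apply, Pi.sub_apply, Pi.div_apply]
    ring
  refine convexOn_of_hasDerivWithinAt2_nonneg (convex_Ici 1)
    (fun x hx => (key x hx).continuousAt.continuousWithinAt)
    (fun x hx => (key x ?_).hasDerivWithinAt) (fun x hx => (key2 x ?_).hasDerivWithinAt) ?_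
  · rw [interior_Ici] at hx; exact le_of_lt hx
  · rw [interior_Ici] at hx; exact le_of_lt hx
  · intro x hx
    rw [interior_Ici] at hx
    have hx1 : 1 < x := hx
    obtain ⟨u, hu⟩ : ∃ u, u = x + a - 2 := ⟨_, rfl⟩
    have e1 : x + a - 1 = u + 1 := by rw [hu]; ring
    have hxu : x ≤ u := by linarith
    have hu0 : 0 < u := by linarith
    rw [e1, ← hu]
    have hl : 2 / (2 * u + 1) ≤ Real.log (u + 1) - Real.log u := by
      have := Real.le_log_one_add_of_nonneg (x := 1 / u) (by positivity)
      rw [← Real.log_div (by positivity) hu0.ne']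
      calc 2 / (2 * u + 1) = 2 * (1 / u) / (1 / u + 2) := by field_simp; try ring
        _ ≤ _ := this
        _ = _ := by congr 1; field_simp; try ring
    have hq : 0 ≤ 2 * (2 / (2 * u + 1)) + 2 * (2 * x - 1) * (1 / (u + 1) - 1 / u)
        + x * (x - 1) * (1 / u ^ 2 - 1 / (u + 1) ^ 2) := by
      have : 2 * (2 / (2 * u + 1)) + 2 * (2 * x - 1) * (1 / (u + 1) - 1 / u)
        + x * (x - 1) * (1 / u ^ 2 - 1 / (u + 1) ^ 2) =
        (4 * u ^ 2 * (u + 1) ^ 2 - 2 * (2 * x - 1) * (u * (u + 1)) * (2 * u + 1)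
          + x * (x - 1) * (2 * u + 1) ^ 2) / ((2 * u + 1) * u ^ 2 * (u + 1) ^ 2) := by
        field_simp
        ring
      rw [this]
      apply div_nonneg _ (by positivity)
      obtain ⟨w, rfl⟩ : ∃ w, u = x + w := ⟨u - x, by ring⟩
      obtain ⟨v, rfl⟩ : ∃ v, x = v + 1 := ⟨x - 1, by ring⟩
      have hw : 0 ≤ w := by linarith
      have hv : 0 ≤ v := by linarith
      ring_nf
      positivity
    linarith

lemma H_nat_convex (a : ℝ) (ha : 2 ≤ a) (g : ℕ → ℝ)
    (hg : ∀ k : ℕ, g k = Real.log ((k : ℝ) + 1 + a) - Real.log (k + a)) (H : ℕ → ℝ)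
    (hH : ∀ k : ℕ, H k = (k : ℝ) * (((k - 1 : ℕ) : ℝ) * g (k - 1 - 1))) (k : ℕ) :
    0 ≤ H (k + 2) - 2 * H (k + 1) + H k := by
  have e : ∀ k : ℕ, H (k + 1) = (fun x : ℝ => x * (x - 1) *
      (Real.log (x + a - 1) - Real.log (x + a - 2))) ((k : ℝ) + 1) := by
    intro k
    rw [hH]
    rcases k with _ | k
    · simp
    · simp only [Nat.add_sub_cancel, hg]
      push_cast
      rw [show (k : ℝ) + 1 + 1 + a - 1 = k + 1 + a by ring,
        show (k : ℝ) + 1 + 1 + a - 2 = k + a by ring]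
      ring
  rcases k with _ | k
  · have h0 : H 0 = 0 := by rw [hH]; simp
    have h1 : H 1 = 0 := by rw [hH]; simp
    have h2 : 0 ≤ H 2 := by
      rw [hH, hg]
      have : Real.log a ≤ Real.log (1 + a) := Real.log_le_log (by linarith) (by linarith)
      simp
      linarith
    simp only [zero_add, h0, h1]; linarith
  · have h := (H_real_convex a ha).2 (show (k : ℝ) + 1 ∈ Set.Ici (1 : ℝ) by simp)
      (show ((k + 2 : ℕ) : ℝ) + 1 ∈ Set.Ici (1 : ℝ) by simp; positivity) 
      (show (0 : ℝ) ≤ 1 / 2 by norm_num) (show (0 : ℝ) ≤ 1 / 2 by norm_num) (by norm_num)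
    rw [show (1 / 2 : ℝ) • ((k : ℝ) + 1) + (1 / 2 : ℝ) • (((k + 2 : ℕ) : ℝ) + 1)
      = ((k + 1 : ℕ) : ℝ) + 1 by push_cast; simp only [smul_eq_mul]; ring] at h
    rw [← e, ← e, ← e] at h
    simp only [smul_eq_mul] at h
    rw [show k + 1 + 2 = k + 2 + 1 by ring]
    linarith

/-- `q * (E f(B_{N+N'}) - E f(B_N))` is convex for `f = log (· + a)`. -/
lemma diff_convex (a : ℝ) (ha : 2 ≤ a) (N N' : ℕ) :
    ConvexOn ℝ (Set.Icc 0 1) (fun q => q * (binE (N + N') (fun k => Real.log ((k : ℝ) + a)) q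
      - binE N (fun k => Real.log ((k : ℝ) + a)) q)) := by
  induction N' with
  | zero =>
    simp only [add_zero, sub_self, mul_zero]
    exact convexOn_const 0 (convex_Icc 0 1)
  | succ T ih =>
    have hc := binE_convexOn (N + T)
      (fun k : ℕ => (k : ℝ) * (fun k : ℕ => (k : ℝ) * (fun k : ℕ => Real.log ((k : ℝ) + 1 + a) -
        Real.log (k + a)) (k - 1)) (k - 1))
      (fun k => H_nat_convex a ha _ (fun _ => rfl) _ (fun _ => rfl) k)
    have hc2 := hc.smul (c := 1 / (((N + T : ℕ) : ℝ) + 1) / (((N + T + 1 : ℕ) : ℝ) + 1))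
      (by positivity)
    refine (ih.add hc2).congr ?_
    intro q _
    simp only [Pi.add_apply, smul_eq_mul]
    have s1 := binE_shift (N + T + 1) (fun k : ℕ => (k : ℝ) * (fun k : ℕ =>
      Real.log ((k : ℝ) + 1 + a) - Real.log (k + a)) (k - 1)) q
    have s2 := binE_shift (N + T) (fun k : ℕ => Real.log ((k : ℝ) + 1 + a) - Real.log (k + a)) q
    rw [s2] at s1
    simp only [add_assoc, one_add_one_eq_two] at s1 ⊢
    simp only [← add_assoc] at s1 ⊢
    rw [s1, binE_succ,
      binE_sub (N + T) (fun k : ℕ => Real.log ((k : ℝ) + 1 + a))]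
    push_cast
    field_simp
    ring

open Polynomial in
/-- The linear functional sending `X ^ s` to `G s`. -/
noncomputable def polyL (G : ℕ → ℝ) : ℝ[X] →ₗ[ℝ] ℝ :=
  Polynomial.lsum (fun s => (LinearMap.id : ℝ →ₗ[ℝ] ℝ).smulRight (G s))

open Polynomial in
lemma polyL_monomial (G : ℕ → ℝ) (s : ℕ) (c : ℝ) : polyL G (monomial s c) = c * G s := by
  simp [polyL, Polynomial.lsum_apply, Polynomial.sum_monomial_index]

open Polynomial in
lemma polyL_X_mul (G : ℕ → ℝ) (P : ℝ[X]) :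
    polyL G (X * P) = polyL (fun k => G (k + 1)) P := by
  induction P using Polynomial.induction_on' with
  | add p q hp hq => simp [mul_add, hp, hq]
  | monomial s c => rw [X_mul_monomial, polyL_monomial, polyL_monomial]

open Polynomial in
lemma polyL_pow (N : ℕ) (q : ℝ) : ∀ G : ℕ → ℝ,
    polyL G ((C q * X + C (1 - q)) ^ N) = binE N G q := by
  induction N with
  | zero =>
    intro G
    rw [pow_zero, ← monomial_zero_one, polyL_monomial]; simp [binE]
  | succ N ih =>
    intro G
    have : (C q * X + C (1 - q)) ^ (N + 1) = q • (X * (C q * X + C (1 - q)) ^ N) +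
        (1 - q) • (C q * X + C (1 - q)) ^ N := by
      rw [smul_eq_C_mul, smul_eq_C_mul]; ring
    rw [this, map_add, map_smul, map_smul, polyL_X_mul, ih, ih, binE_succ]
    simp only [smul_eq_mul]; ring

open Polynomial in
lemma multinomial_marginal {ι : Type*} [Fintype ι] [DecidableEq ι] (N : ℕ) (w : ι → ℝ)
    (hw : ∑ k, w k = 1) (S : ι → Prop) [DecidablePred S] (G : ℕ → ℝ) :
    ∑ x ∈ Finset.piAntidiag (Finset.univ : Finset ι) N,
      (Nat.multinomial Finset.univ x : ℝ) * (∏ k, w k ^ x k) * G (∑ k, if S k then x k else 0)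
      = binE N G (∑ k, if S k then w k else 0) := by
  rw [← polyL_pow]
  have h1 : C (∑ k, if S k then w k else 0) * X + C (1 - ∑ k, if S k then w k else 0) =
      ∑ k, monomial (if S k then 1 else 0) (w k) := by
    rw [← hw, ← Finset.sum_sub_distrib, map_sum, map_sum, Finset.sum_mul, ← Finset.sum_add_distrib]
    refine Finset.sum_congr rfl fun k _ => ?_
    split_ifs
    · simp [C_mul_X_eq_monomial]
    · simp
  rw [h1, Finset.sum_pow_eq_sum_piAntidiag, map_sum]
  refine Finset.sum_congr rfl fun x _ => ?_
  have h2 : ∏ k, (monomial (if S k then 1 else 0) (w k)) ^ x k =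
      monomial (∑ k, if S k then x k else 0) (∏ k, w k ^ x k) := by
    rw [← C_mul_X_pow_eq_monomial, map_prod, ← Finset.prod_pow_eq_pow_sum,
      ← Finset.prod_mul_distrib]
    refine Finset.prod_congr rfl fun k _ => ?_
    rw [← C_mul_X_pow_eq_monomial, mul_pow, ← pow_mul, C_pow]
    split_ifs <;> simp
  rw [h2, ← nsmul_eq_mul (Nat.multinomial Finset.univ x) (monomial _ _), map_nsmul, polyL_monomial,
    nsmul_eq_mul, mul_assoc]

lemma sum_suppX (m n N : ℕ) (p : Fin (m+1) → Fin (n+1) → ℝ)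
    (hsum : ∑ i, ∑ j, p i j = 1) (G : ℕ → ℝ) (i : Fin (m+1)) :
    ∑ x ∈ suppX m n N, wX p x * G (∑ j, (x i j : ℕ)) = binE N G (∑ j, p i j) := by
  have h := multinomial_marginal N (fun k : Fin (m+1) × Fin (n+1) => p k.1 k.2)
    (by rw [Fintype.sum_prod_type]; exact hsum) (fun k => k.1 = i) G
  have e : ∀ {M : Type} [AddCommMonoid M] (f : Fin (m+1) → Fin (n+1) → M),
      ∑ k : Fin (m+1) × Fin (n+1), (if k.1 = i then f k.1 k.2 else 0) = ∑ j, f i j := by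
    intro M _ f
    rw [Fintype.sum_prod_type, Finset.sum_eq_single i]
    · simp
    · intro b _ hb; simp [hb]
    · simp
  rw [e] at h
  rw [← h]
  refine Finset.sum_bij (fun x _ k => (x k.1 k.2 : ℕ)) ?_ ?_ ?_ ?_
  · intro x hx
    simp only [suppX, Finset.mem_filter] at hx
    simp [Finset.mem_piAntidiag, Fintype.sum_prod_type, hx.2]
  · intro x _ y _ hxy
    funext i j
    exact Fin.ext (congrFun hxy (i, j))
  · intro y hy
    rw [Finset.mem_piAntidiag] at hy
    have hle : ∀ k, y k < N + 1 := fun k => by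
      have h1 := Finset.single_le_sum (f := y) (fun _ _ => Nat.zero_le _) (Finset.mem_univ k)
      have h2 : ∑ k, y k = _ := hy.1
      omega
    refine ⟨fun i j => ⟨y (i, j), hle _⟩, ?_, rfl⟩
    simp only [suppX, Finset.mem_filter, Finset.mem_univ, true_and]
    rw [← hy.1, Fintype.sum_prod_type]
  · intro x _
    rw [e (fun a b => (x a b : ℕ)), wX, Fintype.prod_prod_type]

lemma sum_suppY (m n N' : ℕ) (p : Fin (m+1) → Fin (n+1) → ℝ)
    (hsum : ∑ i, ∑ j, p i j = 1) (G : ℕ → ℝ) (i : Fin (m+1)) :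
    ∑ y ∈ suppY m N', wY p y * G (y i : ℕ) = binE N' G (∑ j, p i j) := by
  have h := multinomial_marginal N' (fun k : Fin (m+1) => ∑ j, p k j) hsum (fun k => k = i) G
  simp only [Finset.sum_ite_eq', Finset.mem_univ, if_true] at h
  rw [← h]
  refine Finset.sum_bij (fun y _ k => (y k : ℕ)) ?_ ?_ ?_ ?_
  · intro x hx
    simp only [suppY, Finset.mem_filter] at hx
    simp [Finset.mem_piAntidiag, hx.2]
  · intro x _ y _ hxy
    funext i
    exact Fin.ext (congrFun hxy i)
  · intro y hy
    rw [Finset.mem_piAntidiag] at hy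
    have hle : ∀ k, y k < N' + 1 := fun k => by
      have h1 := Finset.single_le_sum (f := y) (fun _ _ => Nat.zero_le _) (Finset.mem_univ k)
      have h2 : ∑ k, y k = _ := hy.1
      omega
    refine ⟨fun i => ⟨y i, hle _⟩, ?_, rfl⟩
    simp only [suppY, Finset.mem_filter, Finset.mem_univ, true_and]
    exact hy.1
  · intro x _
    rw [wY]

lemma loss_diff (m n N N' : ℕ) (p : Fin (m+1) → Fin (n+1) → ℝ) (hp : ∀ i j, 0 < p i j)
    (x : Fin (m+1) → Fin (n+1) → Fin (N+1)) (y : Fin (m+1) → Fin (N'+1)) :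
    entropyLoss (phat x y) p - entropyLoss (ptilde x) p =
      ∑ i, (∑ j, p i j) * (Real.log ((N : ℝ) + (N' : ℝ) + (1 + m) * (1 + n) / 2)
        - Real.log ((N : ℝ) + (1 + m) * (1 + n) / 2)
        + Real.log (((∑ j, (x i j : ℕ) : ℕ) : ℝ) + (1 + n) / 2)
        - Real.log ((((∑ j, (x i j : ℕ)) + (y i : ℕ) : ℕ) : ℝ) + (1 + n) / 2)) := by
  unfold entropyLoss
  rw [← Finset.sum_sub_distrib]
  refine Finset.sum_congr rfl fun i _ => ?_
  rw [← Finset.sum_sub_distrib, Finset.sum_mul]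
  refine Finset.sum_congr rfl fun j _ => ?_
  rw [← mul_sub]
  congr 1
  unfold phat ptilde
  have h0 := hp i j
  rw [Nat.cast_add]
  have hs : (0 : ℝ) ≤ ((∑ j, (x i j : ℕ) : ℕ) : ℝ) := Nat.cast_nonneg _
  generalize ((∑ j, (x i j : ℕ) : ℕ) : ℝ) = s at *
  have hA : (0 : ℝ) < (N : ℝ) + (1 + m) * (1 + n) / 2 := by positivity
  have hB : (0 : ℝ) < (N : ℝ) + (N' : ℝ) + (1 + m) * (1 + n) / 2 := by positivity
  have hC : (0 : ℝ) < s + (1 + n) / 2 := by positivity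
  have hD : (0 : ℝ) < s + (y i : ℕ) + (1 + n) / 2 := by positivity
  have hE : (0 : ℝ) < ((x i j : ℕ) : ℝ) + 1 / 2 := by positivity
  rw [Real.log_div h0.ne' (by positivity), Real.log_div h0.ne' (by positivity),
    Real.log_mul (by positivity) (by positivity), Real.log_div hD.ne' hB.ne',
    Real.log_div hE.ne' hC.ne', Real.log_div hE.ne' hA.ne']
  ring

lemma riskDiff_eq (m n N N' : ℕ) (p : Fin (m+1) → Fin (n+1) → ℝ) (hp : ∀ i j, 0 < p i j)
    (hsum : ∑ i, ∑ j, p i j = 1) :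
    riskDiff m n p N N' = Real.log ((N : ℝ) + (N' : ℝ) + (1 + m) * (1 + n) / 2)
        - Real.log ((N : ℝ) + (1 + m) * (1 + n) / 2) -
      ∑ i, (fun q => q * (binE (N + N') (fun k => Real.log ((k : ℝ) + (1 + n) / 2)) q
      - binE N (fun k => Real.log ((k : ℝ) + (1 + n) / 2)) q)) (∑ j, p i j) := by
  unfold riskDiff
  simp only [loss_diff m n N N' p hp]
  generalize Real.log ((N : ℝ) + (N' : ℝ) + (1 + m) * (1 + n) / 2)
        - Real.log ((N : ℝ) + (1 + m) * (1 + n) / 2) = c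
  have step : ∀ i : Fin (m+1), ∑ x ∈ suppX m n N, ∑ y ∈ suppY m N', wX p x * wY p y *
      ((∑ j, p i j) * (c + Real.log (((∑ j, (x i j : ℕ) : ℕ) : ℝ) + (1 + n) / 2)
        - Real.log ((((∑ j, (x i j : ℕ)) + (y i : ℕ) : ℕ) : ℝ) + (1 + n) / 2))) =
      (∑ j, p i j) * c - (fun q => q * (binE (N + N') (fun k => Real.log ((k : ℝ) + (1 + n) / 2)) q
      - binE N (fun k => Real.log ((k : ℝ) + (1 + n) / 2)) q)) (∑ j, p i j) := by
    intro i
    have hy : ∀ x : Fin (m+1) → Fin (n+1) → Fin (N+1), ∑ y ∈ suppY m N', wX p x * wY p y *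
      ((∑ j, p i j) * (c + Real.log (((∑ j, (x i j : ℕ) : ℕ) : ℝ) + (1 + n) / 2)
        - Real.log ((((∑ j, (x i j : ℕ)) + (y i : ℕ) : ℕ) : ℝ) + (1 + n) / 2))) =
        (∑ j, p i j) * (wX p x * (fun s : ℕ => binE N' (fun l : ℕ =>
          c + Real.log ((s : ℝ) + (1 + n) / 2) - Real.log (((s + l : ℕ) : ℝ) + (1 + n) / 2))
            (∑ j, p i j)) (∑ j, (x i j : ℕ))) := by
      intro x
      beta_reduce
      rw [← sum_suppY m n N' p hsum _ i]
      rw [Finset.mul_sum, Finset.mul_sum]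
      refine Finset.sum_congr rfl fun y _ => ?_
      ring
    rw [Finset.sum_congr rfl fun x _ => hy x, ← Finset.mul_sum,
      sum_suppX m n N p hsum (fun s : ℕ => binE N' (fun l : ℕ =>
          c + Real.log ((s : ℝ) + (1 + n) / 2) - Real.log (((s + l : ℕ) : ℝ) + (1 + n) / 2))
            (∑ j, p i j)) i]
    generalize (∑ j, p i j) = q
    simp only [binE_sub, binE_const, binE_add]
    rw [binE_comp N N' (fun k => Real.log ((k : ℝ) + (1 + n) / 2))]
    ring
  simp only [Finset.mul_sum]
  rw [Finset.sum_congr rfl fun x _ => Finset.sum_comm, Finset.sum_comm]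
  rw [Finset.sum_congr rfl fun i _ => step i, Finset.sum_sub_distrib, ← Finset.sum_mul, hsum,
    one_mul]

theorem risk_difference_maximized_at_uniform_general (m n N N' : ℕ)
    (hm : 1 ≤ m) (hn : 3 ≤ n) (hN : 1 ≤ N) (hN' : 1 ≤ N')
    (p : Fin (m+1) → Fin (n+1) → ℝ) (hp : ∀ i j, 0 < p i j)
    (hsum : ∑ i, ∑ j, p i j = 1) :
    riskDiff m n p N N' ≤
      riskDiff m n (fun _ _ => 1 / ((1 + (m : ℝ)) * (1 + (n : ℝ)))) N N' := by
  have hm0 : (0 : ℝ) < 1 + m := by positivity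
  have hn0 : (0 : ℝ) < 1 + n := by positivity
  rw [riskDiff_eq m n N N' p hp hsum, riskDiff_eq m n N N' _ (fun _ _ => by positivity)
    (by simp; field_simp; ring)]
  have ha : (2 : ℝ) ≤ (1 + n) / 2 := by
    have : (3 : ℝ) ≤ n := by exact_mod_cast hn
    linarith
  have hc := diff_convex ((1 + n) / 2) ha N N'
  generalize (fun q => q * (binE (N + N') (fun k => Real.log ((k : ℝ) + (1 + n) / 2)) q
      - binE N (fun k => Real.log ((k : ℝ) + (1 + n) / 2)) q)) = φ at *
  have hP : ∀ i, (∑ j, p i j) ∈ Set.Icc (0 : ℝ) 1 := fun i =>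
    ⟨Finset.sum_nonneg fun j _ => (hp i j).le, by
      rw [← hsum]
      exact Finset.single_le_sum (f := fun i => ∑ j, p i j)
        (fun i _ => Finset.sum_nonneg fun j _ => (hp i j).le) (Finset.mem_univ i)⟩
  have hj := hc.map_sum_le (t := Finset.univ) (w := fun _ : Fin (m+1) => 1 / (1 + (m : ℝ)))
    (p := fun i => ∑ j, p i j) (fun _ _ => by positivity) (by simp; field_simp; ring)
    (fun i _ => hP i)
  simp only [smul_eq_mul, ← Finset.mul_sum, hsum, mul_one] at hj
  have e : ∑ _j : Fin (n+1), 1 / ((1 + (m : ℝ)) * (1 + (n : ℝ))) = 1 / (1 + (m : ℝ)) := by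
    simp; field_simp; ring
  simp only [e, Finset.sum_const, Finset.card_univ, Fintype.card_fin, nsmul_eq_mul]
  rw [one_div_mul_eq_div, le_div_iff₀ hm0] at hj
  push_cast
  linarith
end
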